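/- arXiv:2508.07160 — 5 statements merged into one kernel-verified Lean document; each statement's English description precedes it below -/
import Mathlib

section
/- The N×N discrete Fresnel transform (DFnT) matrix Φ_N is unitary, i.e., Φ_N Φ_N^H = I_N. -/
open Matrix Complex

/-- The `N × N` discrete Fresnel transform (DFnT) matrix `Φ_N`, with entries
`[Φ_N]_{m,n} = (1/√N) · exp(−iπ/4 + i(π/N)(m − n + (N mod 2)/2)²)`. -/
noncomputable def dfnt (N : ℕ) : Matrix (Fin N) (Fin N) ℂ :=
  Matrix.of fun m n : Fin N =>
    (1 / (Real.sqrt N : ℂ)) *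
      Complex.exp (-((Real.pi : ℂ) / 4) * Complex.I +
        ((Real.pi : ℂ) / N) * Complex.I *
          (((m : ℕ) : ℂ) - ((n : ℕ) : ℂ) + ((N % 2 : ℕ) : ℂ) / 2) ^ 2)

/-!
Since `(m - n + c)² = (m + c)² - 2mn + (n - c)² - c²`, up to a scalar of modulus one `Φ_N` is the
normalised discrete Fourier matrix multiplied on both sides by diagonal matrices with entries of
modulus one. The Fourier matrix is unitary because the powers of a nontrivial `N`-th root of unity
sum to zero.
-/

theorem mem_unitary_of_norm_eq_one {𝕜 : Type*} [RCLike 𝕜] {z : 𝕜} (hz : ‖z‖ = 1) :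
    z ∈ unitary 𝕜 := by
  rw [Unitary.mem_iff_self_mul_star, RCLike.star_def, RCLike.mul_conj, hz]
  simp

theorem diagonal_mem_unitaryGroup {n R : Type*} [Fintype n] [DecidableEq n] [CommRing R]
    [StarRing R] {d : n → R} (hd : ∀ i, d i ∈ unitary R) :
    diagonal d ∈ unitaryGroup n R := by
  rw [mem_unitaryGroup_iff, star_eq_conjTranspose, diagonal_conjTranspose, diagonal_mul_diagonal,
    ← diagonal_one]
  exact congrArg diagonal (funext fun i => Unitary.mul_star_self_of_mem (hd i))

theorem vandermonde_pow_mul_transpose_vandermonde_inv_pow {K : Type*} [Field K] {ζ : K} {N : ℕ}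
    (hζ : IsPrimitiveRoot ζ N) :
    (vandermonde fun m : Fin N => ζ ^ (m : ℕ)) *
      (vandermonde fun m : Fin N => ζ⁻¹ ^ (m : ℕ))ᵀ = (N : K) • 1 := by
  ext i j
  have hζ0 : ζ ≠ 0 := hζ.ne_zero i.pos.ne'
  rw [vandermonde_mul_vandermonde_transpose,
    Fin.sum_univ_eq_sum_range (fun k => (ζ ^ (i : ℕ) * ζ⁻¹ ^ (j : ℕ)) ^ k), inv_pow]
  rcases eq_or_ne i j with rfl | hij
  · simp [hζ0]
  · have hne : ζ ^ (i : ℕ) * (ζ ^ (j : ℕ))⁻¹ ≠ 1 := fun h =>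
      hij (Fin.ext (hζ.pow_inj i.isLt j.isLt (eq_of_mul_inv_eq_one h)))
    have hpow : (ζ ^ (i : ℕ) * (ζ ^ (j : ℕ))⁻¹) ^ N = 1 := by
      rw [mul_pow, inv_pow, pow_right_comm, hζ.pow_eq_one, pow_right_comm, hζ.pow_eq_one]
      simp
    rw [geom_sum_eq hne, hpow]
    simp [hij]

/-- The normalised Fourier matrix with entries `ζ ^ (m * n) / √N`, written as a rescaled Vandermonde
matrix. The discrete Fourier transform is the case `ζ = exp (-2πi / N)`. -/
noncomputable def fourierMatrix (N : ℕ) (ζ : ℂ) : Matrix (Fin N) (Fin N) ℂ :=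
  (√(N : ℝ) : ℂ)⁻¹ • vandermonde fun m : Fin N => ζ ^ (m : ℕ)

theorem conjTranspose_fourierMatrix {N : ℕ} {ζ : ℂ} (hζ : ‖ζ‖ = 1) :
    (fourierMatrix N ζ)ᴴ =
      (√(N : ℝ) : ℂ)⁻¹ • (vandermonde fun m : Fin N => ζ⁻¹ ^ (m : ℕ))ᵀ := by
  ext m n
  simp [fourierMatrix, vandermonde_apply, Complex.inv_eq_conj hζ]

theorem fourierMatrix_mem_unitaryGroup {N : ℕ} {ζ : ℂ} (hN : N ≠ 0) (hζ : IsPrimitiveRoot ζ N) :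
    fourierMatrix N ζ ∈ unitaryGroup (Fin N) ℂ := by
  have hscale : (√(N : ℝ) : ℂ)⁻¹ * (√(N : ℝ) : ℂ)⁻¹ * N = 1 := by
    rw [← mul_inv, ← ofReal_mul, Real.mul_self_sqrt N.cast_nonneg, ofReal_natCast,
      inv_mul_cancel₀ (Nat.cast_ne_zero.mpr hN)]
  rw [mem_unitaryGroup_iff, star_eq_conjTranspose,
    conjTranspose_fourierMatrix (hζ.norm'_eq_one hN), fourierMatrix, smul_mul_smul_comm,
    vandermonde_pow_mul_transpose_vandermonde_inv_pow hζ, smul_smul, hscale, one_smul]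

/-- The quadratic phase (chirp) `exp (iπt² / N)`, the kernel of the discrete Fresnel transform. For
`N = 0` it is `1`, since then `π / N = 0`. -/
noncomputable def chirp (N : ℕ) (t : ℝ) : ℂ :=
  exp ((Real.pi / N * t ^ 2 : ℝ) * I)

theorem norm_chirp (N : ℕ) (t : ℝ) : ‖chirp N t‖ = 1 :=
  norm_exp_ofReal_mul_I _

theorem diagonal_chirp_mem_unitaryGroup {n : Type*} [Fintype n] [DecidableEq n] (N : ℕ)
    (t : n → ℝ) : (diagonal fun i => chirp N (t i)) ∈ unitaryGroup n ℂ :=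
  diagonal_mem_unitaryGroup fun i => mem_unitary_of_norm_eq_one (norm_chirp N (t i))

theorem chirp_sub_add (N m n : ℕ) (c : ℝ) :
    chirp N (m - n + c) = (chirp N c)⁻¹ *
      (chirp N (m + c) * ((exp (2 * Real.pi * I / N))⁻¹ ^ m) ^ n * chirp N (n - c)) := by
  simp only [chirp, ← exp_neg, ← exp_nat_mul, ← exp_add]
  congr 1
  push_cast
  ring

/-- The matrix with entries `chirp N (m - n + c) / √N`. Up to a constant phase, the discrete Fresnel
transform is the case `c = (N mod 2) / 2`. -/
noncomputable def chirpMatrix (N : ℕ) (c : ℝ) : Matrix (Fin N) (Fin N) ℂ :=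
  Matrix.of fun m n : Fin N => (√(N : ℝ) : ℂ)⁻¹ * chirp N (m - n + c)

theorem chirpMatrix_eq_smul_diagonal_mul_fourierMatrix_mul_diagonal (N : ℕ) (c : ℝ) :
    chirpMatrix N c = (chirp N c)⁻¹ •
      ((diagonal fun m : Fin N => chirp N (m + c)) *
        fourierMatrix N (exp (2 * Real.pi * I / N))⁻¹ *
        diagonal fun n : Fin N => chirp N (n - c)) := by
  ext m n
  rw [chirpMatrix, of_apply, chirp_sub_add, Matrix.smul_apply, mul_diagonal, diagonal_mul,
    fourierMatrix, Matrix.smul_apply, vandermonde_apply, smul_eq_mul, smul_eq_mul]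
  ring

theorem chirpMatrix_mem_unitaryGroup {N : ℕ} (hN : N ≠ 0) (c : ℝ) :
    chirpMatrix N c ∈ unitaryGroup (Fin N) ℂ := by
  have hphase : (chirp N c)⁻¹ ∈ unitary ℂ :=
    mem_unitary_of_norm_eq_one (by rw [norm_inv, norm_chirp, inv_one])
  have hfourier : fourierMatrix N (exp (2 * Real.pi * I / N))⁻¹ ∈ unitaryGroup (Fin N) ℂ :=
    fourierMatrix_mem_unitaryGroup hN (isPrimitiveRoot_exp N hN).inv
  rw [chirpMatrix_eq_smul_diagonal_mul_fourierMatrix_mul_diagonal]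
  exact Unitary.smul_mem_of_mem hphase <|
    mul_mem (mul_mem (diagonal_chirp_mem_unitaryGroup N _) hfourier)
      (diagonal_chirp_mem_unitaryGroup N _)

theorem dfnt_eq_smul_chirpMatrix (N : ℕ) :
    dfnt N = exp ((-(Real.pi / 4) : ℝ) * I) • chirpMatrix N ((N % 2 : ℕ) / 2) := by
  ext m n
  rw [Matrix.smul_apply, smul_eq_mul, dfnt, chirpMatrix, of_apply, of_apply, chirp, one_div,
    mul_left_comm, ← exp_add]
  congr 2
  push_cast
  ring

/-- The DFnT matrix is unitary: `Φ_N Φ_N^H = I_N`. -/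
theorem dfnt_mul_conjTranspose_eq_one (N : ℕ) (hN : 0 < N) :
    dfnt N * (dfnt N)ᴴ = 1 := by
  have hphase : exp ((-(Real.pi / 4) : ℝ) * I) ∈ unitary ℂ :=
    mem_unitary_of_norm_eq_one (norm_exp_ofReal_mul_I _)
  have hdfnt : dfnt N ∈ unitaryGroup (Fin N) ℂ := by
    rw [dfnt_eq_smul_chirpMatrix]
    exact Unitary.smul_mem_of_mem hphase (chirpMatrix_mem_unitaryGroup hN.ne' _)
  exact mem_unitaryGroup_iff.mp hdfnt
end

section
/- The inverse DFnT matrix Φ_N^H is circulant: there exists a vector φ ∈ ℂ^N such that [Φ_N^H]_{m,n} = φ_{(m−n) mod N} for all 0 ≤ m, n ≤ N−1; equivalently, its entries depend only on (m−n) mod N. -/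
open Matrix Complex

/-- The quadratic chirp `d ↦ exp (i (π / N) (d + a / 2)²)` on the integers; the DFnT is built from
the case `a = N mod 2`. -/
noncomputable def quadraticChirp (N a d : ℤ) : ℂ :=
  exp ((Real.pi : ℂ) / N * I * (d + (a : ℂ) / 2) ^ 2)

-- Shifting `d` by `N` adds `iπ (2 d + a + N)` to the exponent, a multiple of `2πi` by parity.
theorem quadraticChirp_periodic {N a : ℤ} (h : Even (N + a)) :
    Function.Periodic (quadraticChirp N a) N := by
  intro d
  obtain rfl | hN := eq_or_ne N 0
  · rw [add_zero]
  obtain ⟨t, ht⟩ := h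
  have ha : (a : ℂ) = t + t - N := by
    rw [eq_sub_iff_add_eq']
    exact_mod_cast ht
  have hN' : (N : ℂ) ≠ 0 := Int.cast_ne_zero.mpr hN
  refine exp_eq_exp_iff_exists_int.mpr ⟨d + t, ?_⟩
  rw [ha]
  push_cast
  field_simp
  ring

theorem periodic_apply_emod {α : Type*} {f : ℤ → α} {c : ℤ} (hf : Function.Periodic f c) (d : ℤ) :
    f (d % c) = f d := by
  rw [Int.emod_def, mul_comm, ← smul_eq_mul, hf.sub_zsmul_eq]

theorem of_periodic_sub_eq_circulant {α : Type*} {N : ℕ} {f : ℤ → α}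
    (hf : Function.Periodic f N) :
    (of fun m n : Fin N => f ((m : ℤ) - n)) = circulant fun k : Fin N => f k := by
  ext m n
  rw [of_apply, circulant_apply, Fin.coe_int_sub_eq_mod, periodic_apply_emod hf]

/-- The convolution kernel of the DFnT: `[Φ_N]_{m,n}` is its value at the integer `m - n`. -/
noncomputable def dfntKernel (N : ℕ) (d : ℤ) : ℂ :=
  1 / (Real.sqrt N : ℂ) * exp (-((Real.pi : ℂ) / 4) * I) * quadraticChirp N (N % 2 : ℕ) d

theorem dfntKernel_periodic (N : ℕ) : Function.Periodic (dfntKernel N) N := by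
  have h : Even ((N : ℤ) + (N % 2 : ℕ)) := by
    rw [Int.even_iff]
    omega
  intro d
  rw [dfntKernel, quadraticChirp_periodic h d, dfntKernel]

theorem dfnt_apply (N : ℕ) (m n : Fin N) : dfnt N m n = dfntKernel N ((m : ℤ) - n) := by
  rw [dfnt, of_apply, exp_add, ← mul_assoc, dfntKernel, quadraticChirp]
  push_cast
  rfl

theorem dfnt_eq_circulant (N : ℕ) : dfnt N = circulant fun k : Fin N => dfntKernel N k :=
  (ext (dfnt_apply N)).trans (of_periodic_sub_eq_circulant (dfntKernel_periodic N))

/-- The inverse DFnT matrix `Φ_N^H` is circulant: there is a vector `φ ∈ ℂ^N` such that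
`[Φ_N^H]_{m,n} = φ_{(m−n) mod N}` for all `m, n` (here `(m−n) mod N` is computed in `ℕ`
as `(m + N − n) % N`, which lies in `{0,…,N−1}`). -/
theorem dfnt_conjTranspose_circulant (N : ℕ) (hN : 0 < N) :
    ∃ φ : Fin N → ℂ, ∀ m n : Fin N,
      (dfnt N)ᴴ m n = φ ⟨((m : ℕ) + N - (n : ℕ)) % N, Nat.mod_lt _ hN⟩ := by
  refine ⟨star fun k : Fin N => dfntKernel N (-k : Fin N), fun m n => ?_⟩
  have hsub : (⟨((m : ℕ) + N - (n : ℕ)) % N, Nat.mod_lt _ hN⟩ : Fin N) = m - n := by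
    rw [Fin.sub_def, Fin.mk.injEq]
    congr 1
    omega
  rw [hsub, dfnt_eq_circulant, Fin.conjTranspose_circulant, circulant_apply]
end

section
/- Let K = MN and let H = Σ_{l=0}^{L} Σ_{q=−Q}^{Q} h_{l,q} D_K^q Π_K^l for complex coefficients h_{l,q}. Then the effective channel matrix of VOCDM satisfies H_eff := (Φ_N ⊗ I_M) H (Φ_N^H ⊗ I_M) = Σ_{l=0}^{L} Σ_{q=−Q}^{Q} α_q h_{l,q} D_K^q Π_K^{l+qM}, where α_q = exp(i(π/N)·q·((N mod 2) − q)). -/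
open Matrix Complex

/-- The `q`-th integer power `D_K^q` of the diagonal matrix
`D_K = diag(1, e^{2πi/K}, …, e^{2πi(K−1)/K})`: its `k`-th diagonal entry is `e^{2πiqk/K}`. -/
noncomputable def Dzpow (K : ℕ) (q : ℤ) : Matrix (Fin K) (Fin K) ℂ :=
  Matrix.diagonal fun k : Fin K =>
    Complex.exp (2 * (Real.pi : ℂ) * Complex.I * (q : ℂ) * ((k : ℕ) : ℂ) / (K : ℂ))

/-- The `q`-th integer power `Π_K^q` of the cyclic shift permutation matrix `Π_K`
(`[Π_K]_{m,n} = 1` iff `m ≡ n+1 (mod K)`): `[Π_K^q]_{m,n} = 1` iff `m ≡ n + q (mod K)`. -/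
def Pzpow (K : ℕ) (q : ℤ) : Matrix (Fin K) (Fin K) ℂ :=
  Matrix.of fun m n : Fin K =>
    if (((m : ℕ) : ℤ) - ((n : ℕ) : ℤ) - q) % (K : ℤ) = 0 then 1 else 0

/-- `α_q = exp(i(π/N)·q·((N mod 2) − q))`. -/
noncomputable def alphaCoef (N : ℕ) (q : ℤ) : ℂ :=
  Complex.exp (Complex.I * ((Real.pi : ℂ) / N) * (q : ℂ) * (((N % 2 : ℕ) : ℂ) - (q : ℂ)))

/-- Kronecker product of an `N × N` matrix `A` with an `M × M` matrix `B`, using the index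
convention `[A ⊗ B]_{n₁M+m₁, n₂M+m₂} = A_{n₁,n₂} · B_{m₁,m₂}`, realized on `Fin (M * N)`
via `i ↦ (i / M, i % M)`. -/
def kron {M N : ℕ} (hM : 0 < M) (A : Matrix (Fin N) (Fin N) ℂ) (B : Matrix (Fin M) (Fin M) ℂ) :
    Matrix (Fin (M * N)) (Fin (M * N)) ℂ :=
  Matrix.of fun i j : Fin (M * N) =>
    A ⟨(i : ℕ) / M, Nat.div_lt_of_lt_mul i.isLt⟩ ⟨(j : ℕ) / M, Nat.div_lt_of_lt_mul j.isLt⟩ *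
      B ⟨(i : ℕ) % M, Nat.mod_lt _ hM⟩ ⟨(j : ℕ) % M, Nat.mod_lt _ hM⟩

/-!
A shift of the chirp `φ(t) = exp(-iπ/4 + iπ(t + (N mod 2)/2)²/N)/√N` is a modulation of it:
`φ(t) = α_q e^{2πiqt/N} φ(t - q)`. Read entrywise, this is
`Φ_N D_N^q = α_q D_N^q Π_N^q Φ_N`; it also reduces `Φ_N Φ_Nᴴ = 1` to the vanishing of sums of
nontrivial roots of unity. Since `D_{MN}^q = D_N^q ⊗ E` with `E` diagonal and
`Π_{MN}^{qM} = Π_N^q ⊗ I_M`, the exchange relation passes to `Φ_N ⊗ I_M`. Finally `Φ_N` is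
circulant, hence a combination of powers of `Π_N`, so `Φ_N ⊗ I_M` is a combination of powers of
`Π_{MN}` and commutes with every `Π_{MN}^l`.
-/

section PeriodicCirculant

variable {K : ℕ} {f : ℤ → ℂ}

/-- The `K × K` matrix with entries `f (m - n)`. It is a circulant matrix when `f` is
`K`-periodic; indexing by integer differences lets `f` be given by a closed formula on `ℤ`. -/
def diffMatrix (K : ℕ) (f : ℤ → ℂ) : Matrix (Fin K) (Fin K) ℂ :=
  Matrix.of fun m n : Fin K => f ((m : ℕ) - (n : ℕ))

lemma diffMatrix_apply (m n : Fin K) : diffMatrix K f m n = f ((m : ℕ) - (n : ℕ)) := rfl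

lemma Pzpow_eq_diffMatrix (K : ℕ) (q : ℤ) :
    Pzpow K q = diffMatrix K fun t => if (t - q) % (K : ℤ) = 0 then 1 else 0 := rfl

lemma sum_ite_sub_emod_eq_zero {R : Type*} [AddCommMonoid R] {g : ℤ → R}
    (hg : Function.Periodic g K) (hK : 0 < K) (a : ℤ) :
    ∑ x : Fin K, (if (a - (x : ℕ)) % (K : ℤ) = 0 then g (x : ℕ) else 0) = g a := by
  have hK' : (0 : ℤ) < K := by exact_mod_cast hK
  obtain ⟨r, hr⟩ := Int.eq_ofNat_of_zero_le (Int.emod_nonneg a hK'.ne')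
  have hrK : r < K := by exact_mod_cast hr ▸ Int.emod_lt_of_pos a hK'
  have hit_iff (x : Fin K) : (a - (x : ℕ)) % (K : ℤ) = 0 ↔ x = ⟨r, hrK⟩ := by
    rw [← Int.emod_eq_emod_iff_emod_sub_eq_zero, hr,
      Int.emod_eq_of_lt (by positivity) (by exact_mod_cast x.isLt), Fin.ext_iff]
    exact ⟨fun h => by exact_mod_cast h.symm, fun h => by exact_mod_cast h.symm⟩
  simp only [hit_iff, Finset.sum_ite_eq', Finset.mem_univ, if_true]
  calc g (r : ℕ) = g (r + a / K * K) := ((hg.int_mul _) _).symm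
    _ = g a := by rw [← hr, Int.emod_add_ediv_mul]

lemma Pzpow_mul_diffMatrix (hf : Function.Periodic f K) (q : ℤ) :
    Pzpow K q * diffMatrix K f = diffMatrix K fun t => f (t - q) := by
  ext m n
  have hperiodic : Function.Periodic (fun t => f (t - (n : ℕ))) K := hf.sub_const _
  have hsum := sum_ite_sub_emod_eq_zero hperiodic m.pos ((m : ℕ) - q)
  simp only [Matrix.mul_apply, Pzpow, diffMatrix, Matrix.of_apply, ite_mul, one_mul, zero_mul]
  simpa only [sub_right_comm _ q] using hsum

lemma diffMatrix_eq_sum_smul_Pzpow (hf : Function.Periodic f K) :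
    diffMatrix K f = ∑ x : Fin K, f (x : ℕ) • Pzpow K (x : ℕ) := by
  ext m n
  simpa only [diffMatrix_apply, Matrix.sum_apply, Matrix.smul_apply, Pzpow, Matrix.of_apply,
    smul_eq_mul, mul_ite, mul_one, mul_zero]
    using (sum_ite_sub_emod_eq_zero hf m.pos ((m : ℕ) - (n : ℕ))).symm

lemma Pzpow_mul_Pzpow (K : ℕ) (a b : ℤ) : Pzpow K a * Pzpow K b = Pzpow K (a + b) := by
  have hperiodic : Function.Periodic
      (fun t : ℤ => if (t - b) % (K : ℤ) = 0 then (1 : ℂ) else 0) K := fun t => by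
    simp only [add_sub_right_comm, Int.add_emod_right]
  simp only [Pzpow_eq_diffMatrix K b, Pzpow_mul_diffMatrix hperiodic, sub_sub,
    Pzpow_eq_diffMatrix K (a + b)]

lemma Pzpow_commute_Pzpow (K : ℕ) (a b : ℤ) : Commute (Pzpow K a) (Pzpow K b) := by
  rw [Commute, SemiconjBy, Pzpow_mul_Pzpow, Pzpow_mul_Pzpow, add_comm]

end PeriodicCirculant

section Kronecker

lemma sub_sub_mul_emod_mul_eq_zero_iff {M : ℕ} (hM : 0 < M) (N i j : ℕ) (q : ℤ) :
    ((i : ℤ) - j - q * M) % ((M * N : ℕ) : ℤ) = 0 ↔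
      (((i / M : ℕ) : ℤ) - (j / M : ℕ) - q) % (N : ℤ) = 0 ∧ i % M = j % M := by
  have hM' : (0 : ℤ) < M := by exact_mod_cast hM
  by_cases hmod : i % M = j % M
  · have hsplit : (i : ℤ) - j - q * M = M * (((i / M : ℕ) : ℤ) - (j / M : ℕ) - q) := by
      have hi : (i : ℤ) = M * (i / M : ℕ) + (i % M : ℕ) := by
        exact_mod_cast (Nat.div_add_mod i M).symm
      have hj : (j : ℤ) = M * (j / M : ℕ) + (j % M : ℕ) := by
        exact_mod_cast (Nat.div_add_mod j M).symm
      have hrem : ((i % M : ℕ) : ℤ) = (j % M : ℕ) := by rw [hmod]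
      linear_combination hi - hj + hrem
    rw [hsplit, Nat.cast_mul, Int.mul_emod_mul_of_pos _ _ hM', mul_eq_zero]
    simp only [hM'.ne', hmod, false_or, and_true]
  · simp only [hmod, and_false, iff_false]
    intro hzero
    have hdvd : (M : ℤ) ∣ (i : ℤ) - j - q * M :=
      (Dvd.intro _ (Nat.cast_mul M N).symm).trans (Int.dvd_of_emod_eq_zero hzero)
    have hdvd_sub : (M : ℤ) ∣ (i : ℤ) - j := (dvd_sub_left (dvd_mul_left _ q)).1 hdvd
    exact hmod (Nat.modEq_iff_dvd.2 hdvd_sub).symm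

variable {M N : ℕ} (hM : 0 < M)

/-- The splitting `i ↦ (i / M, i % M)` of indices underlying `kron`. -/
def kronIndexEquiv (M N : ℕ) : Fin (M * N) ≃ Fin N × Fin M :=
  (finCongr (mul_comm M N)).trans finProdFinEquiv.symm

lemma kron_eq_submatrix_kronecker (A : Matrix (Fin N) (Fin N) ℂ) (B : Matrix (Fin M) (Fin M) ℂ) :
    kron hM A B =
      (kroneckerMap (· * ·) A B).submatrix (kronIndexEquiv M N) (kronIndexEquiv M N) := rfl

lemma kron_mul_kron (A C : Matrix (Fin N) (Fin N) ℂ) (B D : Matrix (Fin M) (Fin M) ℂ) :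
    kron hM A B * kron hM C D = kron hM (A * C) (B * D) := by
  simp only [kron_eq_submatrix_kronecker, submatrix_mul_equiv, mul_kronecker_mul]

lemma kron_one_one : kron hM (1 : Matrix (Fin N) (Fin N) ℂ) 1 = 1 := by
  rw [kron_eq_submatrix_kronecker, one_kronecker_one, submatrix_one_equiv]

lemma kron_smul_left (c : ℂ) (A : Matrix (Fin N) (Fin N) ℂ) (B : Matrix (Fin M) (Fin M) ℂ) :
    kron hM (c • A) B = c • kron hM A B := by
  ext i j
  simp only [kron, Matrix.of_apply, Matrix.smul_apply, smul_eq_mul, mul_assoc]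

lemma kron_sum_left {ι : Type*} (s : Finset ι) (A : ι → Matrix (Fin N) (Fin N) ℂ)
    (B : Matrix (Fin M) (Fin M) ℂ) :
    kron hM (∑ x ∈ s, A x) B = ∑ x ∈ s, kron hM (A x) B := by
  ext i j
  simp only [kron, Matrix.of_apply, Matrix.sum_apply, Finset.sum_mul]

lemma Dzpow_mul_eq_kron (q : ℤ) :
    Dzpow (M * N) q = kron hM (Dzpow N q)
      (diagonal fun m : Fin M => exp (2 * Real.pi * I * q * (m : ℕ) / (M * N : ℕ))) := by
  rw [kron_eq_submatrix_kronecker, Dzpow, Dzpow, diagonal_kronecker_diagonal,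
    submatrix_diagonal_equiv]
  congr 1
  funext i
  have hi : ((i : ℕ) : ℂ) = M * ((i / M : ℕ) : ℂ) + ((i % M : ℕ) : ℂ) := by
    exact_mod_cast (Nat.div_add_mod (i : ℕ) M).symm
  have hMc : (M : ℂ) ≠ 0 := by exact_mod_cast hM.ne'
  have hNc : (N : ℂ) ≠ 0 := by exact_mod_cast (Nat.pos_of_mul_pos_left i.pos).ne'
  change _ = exp (2 * Real.pi * I * q * (i / M : ℕ) / N) *
    exp (2 * Real.pi * I * q * (i % M : ℕ) / (M * N : ℕ))
  rw [← exp_add, hi]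
  congr 1
  push_cast
  field_simp

lemma Pzpow_mul_eq_kron (q : ℤ) : Pzpow (M * N) (q * M) = kron hM (Pzpow N q) 1 := by
  ext i j
  simp only [kron, Pzpow, Matrix.of_apply, Matrix.one_apply, Fin.mk.injEq,
    sub_sub_mul_emod_mul_eq_zero_iff hM, ite_and, ite_mul, one_mul, zero_mul]

end Kronecker

section RootsOfUnity

lemma sum_fin_pow_eq_zero {R : Type*} [Ring R] [NoZeroDivisors R] {N : ℕ} {x : R}
    (hx : x ^ N = 1) (hx_ne : x ≠ 1) : ∑ n : Fin N, x ^ (n : ℕ) = 0 := by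
  have hgeom := mul_neg_geom_sum x N
  rw [hx, sub_self, mul_eq_zero] at hgeom
  rw [Fin.sum_univ_eq_sum_range (x ^ ·)]
  exact hgeom.resolve_left (sub_ne_zero.2 hx_ne.symm)

lemma sum_exp_two_pi_mul_I_eq_zero {N : ℕ} {a : ℤ} (ha : ¬ (N : ℤ) ∣ a) :
    ∑ n : Fin N, exp (2 * Real.pi * I * a * (n : ℕ) / N) = 0 := by
  rcases eq_or_ne N 0 with rfl | hN
  · simp
  have hroot := isPrimitiveRoot_exp N hN
  have hterm (n : Fin N) : exp (2 * Real.pi * I * a * (n : ℕ) / N) =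
      (exp (2 * Real.pi * I / N) ^ a) ^ (n : ℕ) := by
    rw [← exp_int_mul, ← exp_nat_mul]
    congr 1
    ring
  simp only [hterm]
  refine sum_fin_pow_eq_zero ?_ fun h => ha ((hroot.zpow_eq_one_iff_dvd a).1 h)
  rw [← zpow_natCast, zpow_comm, zpow_natCast, hroot.pow_eq_one, _root_.one_zpow]

end RootsOfUnity

section Fresnel

/-- The chirp `φ` with `[Φ_N]_{m,n} = φ(m - n)`, extended to all of `ℤ`. -/
noncomputable def fresnelChirp (N : ℕ) (t : ℤ) : ℂ :=
  (1 / (Real.sqrt N : ℂ)) * exp (-((Real.pi : ℂ) / 4) * I +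
    ((Real.pi : ℂ) / N) * I * ((t : ℂ) + ((N % 2 : ℕ) : ℂ) / 2) ^ 2)

lemma dfnt_eq_diffMatrix (N : ℕ) : dfnt N = diffMatrix N (fresnelChirp N) := by
  ext m n
  simp only [dfnt, diffMatrix, fresnelChirp, Matrix.of_apply, Int.cast_sub, Int.cast_natCast]

lemma fresnelChirp_periodic (N : ℕ) : Function.Periodic (fresnelChirp N) N := by
  rcases eq_or_ne N 0 with rfl | hN
  · simp
  intro t
  have hNc : (N : ℂ) ≠ 0 := by exact_mod_cast hN
  have hhalf : (N : ℂ) = 2 * ((N / 2 : ℕ) : ℂ) + ((N % 2 : ℕ) : ℂ) := by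
    exact_mod_cast (Nat.div_add_mod N 2).symm
  unfold fresnelChirp
  congr 1
  -- The exponent grows by `iπ(2t + N + N mod 2)`, and `N + N mod 2` is even.
  refine exp_eq_exp_iff_exists_int.2 ⟨t + (N / 2 : ℕ) + (N % 2 : ℕ), ?_⟩
  simp only [Int.cast_add, Int.cast_natCast]
  field_simp
  linear_combination 16 * (N : ℂ) * hhalf

lemma fresnelChirp_eq_alphaCoef_mul_exp_mul (N : ℕ) (q t : ℤ) :
    fresnelChirp N t =
      alphaCoef N q * exp (2 * Real.pi * I * q * t / N) * fresnelChirp N (t - q) := by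
  unfold fresnelChirp alphaCoef
  rw [mul_left_comm, ← exp_add, ← exp_add]
  congr 2
  push_cast
  ring

lemma fresnelChirp_mul_star_self (N : ℕ) (t : ℤ) :
    fresnelChirp N t * star (fresnelChirp N t) = 1 / N := by
  have hphase : -((Real.pi : ℂ) / 4) * I +
      ((Real.pi : ℂ) / N) * I * ((t : ℂ) + ((N % 2 : ℕ) : ℂ) / 2) ^ 2 =
        ((-(Real.pi / 4) + Real.pi / N * (t + (N % 2 : ℕ) / 2) ^ 2 : ℝ) : ℂ) * I := by
    push_cast
    ring
  have hnorm : ‖fresnelChirp N t‖ ^ 2 = 1 / N := by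
    rw [fresnelChirp, hphase, norm_mul, norm_exp_ofReal_mul_I, mul_one, ← ofReal_one, ← ofReal_div,
      norm_real, Real.norm_eq_abs, sq_abs, div_pow, one_pow, Real.sq_sqrt N.cast_nonneg]
  rw [star_def, mul_conj, normSq_eq_norm_sq, hnorm]
  push_cast
  rfl

lemma dfnt_mul_Dzpow (N : ℕ) (q : ℤ) :
    dfnt N * Dzpow N q = alphaCoef N q • (Dzpow N q * Pzpow N q * dfnt N) := by
  rw [dfnt_eq_diffMatrix, Matrix.mul_assoc, Pzpow_mul_diffMatrix (fresnelChirp_periodic N)]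
  ext m n
  simp only [Dzpow, mul_diagonal, diagonal_mul, Matrix.smul_apply, smul_eq_mul, diffMatrix_apply]
  rw [fresnelChirp_eq_alphaCoef_mul_exp_mul N q, mul_right_comm, mul_assoc (alphaCoef N q),
    ← exp_add, mul_assoc]
  congr 3
  push_cast
  ring

lemma fresnelChirp_mul_star (N : ℕ) (s t : ℤ) :
    fresnelChirp N s * star (fresnelChirp N t) =
      alphaCoef N (s - t) * exp (2 * Real.pi * I * (s - t : ℤ) * s / N) / N := by
  rw [fresnelChirp_eq_alphaCoef_mul_exp_mul N (s - t) s, sub_sub_cancel, mul_assoc,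
    fresnelChirp_mul_star_self, mul_one_div]

lemma dfnt_mul_conjTranspose (N : ℕ) : dfnt N * (dfnt N)ᴴ = 1 := by
  ext m k
  have hN : (N : ℂ) ≠ 0 := by exact_mod_cast m.pos.ne'
  simp only [dfnt_eq_diffMatrix, Matrix.mul_apply, conjTranspose_apply, diffMatrix_apply]
  rcases eq_or_ne m k with rfl | hmk
  · rw [Finset.sum_congr rfl fun n _ => fresnelChirp_mul_star_self N _]
    simp [hN]
  have hterm (n : Fin N) :
      fresnelChirp N ((m : ℕ) - (n : ℕ)) * star (fresnelChirp N ((k : ℕ) - (n : ℕ))) =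
        alphaCoef N ((m : ℕ) - (k : ℕ)) *
            exp (2 * Real.pi * I * ((m : ℕ) - (k : ℕ)) * (m : ℕ) / N) / N *
          exp (2 * Real.pi * I * ((k : ℕ) - (m : ℕ) : ℤ) * (n : ℕ) / N) := by
    rw [fresnelChirp_mul_star, sub_sub_sub_cancel_right, div_mul_eq_mul_div,
      mul_assoc (alphaCoef N _), ← exp_add]
    congr 3
    push_cast
    ring
  have hndvd : ¬ (N : ℤ) ∣ (k : ℕ) - (m : ℕ) := fun hdvd => by
    have hsub := Int.eq_zero_of_abs_lt_dvd hdvd (by rw [abs_lt]; omega)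
    omega
  simp only [hterm, ← Finset.mul_sum, sum_exp_two_pi_mul_I_eq_zero hndvd, mul_zero,
    Matrix.one_apply_ne hmk]

end Fresnel

section EffectiveChannel

variable {M : ℕ} (hM : 0 < M) (N : ℕ)

lemma kron_dfnt_one_mul_kron_conjTranspose :
    kron hM (dfnt N) 1 * kron hM (dfnt N)ᴴ 1 = 1 := by
  rw [kron_mul_kron, dfnt_mul_conjTranspose, Matrix.one_mul, kron_one_one]

lemma kron_dfnt_one_commute_Pzpow (l : ℤ) :
    Commute (kron hM (dfnt N) 1) (Pzpow (M * N) l) := by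
  rw [dfnt_eq_diffMatrix, diffMatrix_eq_sum_smul_Pzpow (fresnelChirp_periodic N), kron_sum_left]
  refine Commute.sum_left _ _ _ fun x _ => ?_
  rw [kron_smul_left, ← Pzpow_mul_eq_kron]
  exact (Pzpow_commute_Pzpow _ _ _).smul_left _

lemma kron_dfnt_one_mul_Dzpow (q : ℤ) :
    kron hM (dfnt N) 1 * Dzpow (M * N) q =
      alphaCoef N q • (Dzpow (M * N) q * Pzpow (M * N) (q * M) * kron hM (dfnt N) 1) := by
  simp only [Dzpow_mul_eq_kron hM, Pzpow_mul_eq_kron hM, kron_mul_kron, dfnt_mul_Dzpow,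
    kron_smul_left, Matrix.one_mul, Matrix.mul_one]

lemma kron_dfnt_one_conj_Dzpow_mul_Pzpow (q l : ℤ) :
    kron hM (dfnt N) 1 * (Dzpow (M * N) q * Pzpow (M * N) l) * kron hM (dfnt N)ᴴ 1 =
      alphaCoef N q • (Dzpow (M * N) q * Pzpow (M * N) (l + q * M)) := by
  set W := kron hM (dfnt N) 1
  set D := Dzpow (M * N) q
  calc W * (D * Pzpow (M * N) l) * kron hM (dfnt N)ᴴ 1
      = alphaCoef N q • (D * Pzpow (M * N) (q * M) * (W * Pzpow (M * N) l)) *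
          kron hM (dfnt N)ᴴ 1 := by
        rw [← Matrix.mul_assoc W, kron_dfnt_one_mul_Dzpow, Matrix.smul_mul, Matrix.mul_assoc _ W]
    _ = alphaCoef N q • (D * (Pzpow (M * N) (q * M) * Pzpow (M * N) l) *
          (W * kron hM (dfnt N)ᴴ 1)) := by
        simp only [W, (kron_dfnt_one_commute_Pzpow hM N l).eq, Matrix.smul_mul, Matrix.mul_assoc]
    _ = alphaCoef N q • (D * Pzpow (M * N) (l + q * M)) := by
        rw [Pzpow_mul_Pzpow, kron_dfnt_one_mul_kron_conjTranspose, Matrix.mul_one, add_comm]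

end EffectiveChannel

/-- With `K = MN` and `H = Σ_{l=0}^{L} Σ_{q=−Q}^{Q} h_{l,q} D_K^q Π_K^l`, the effective channel
matrix of VOCDM satisfies
`(Φ_N ⊗ I_M) H (Φ_N^H ⊗ I_M) = Σ_{l=0}^{L} Σ_{q=−Q}^{Q} α_q h_{l,q} D_K^q Π_K^{l+qM}`. -/
theorem vocdm_effective_channel (M N L Q : ℕ) (hM : 0 < M) (hN : 0 < N)
    (h : ℕ → ℤ → ℂ) (H : Matrix (Fin (M * N)) (Fin (M * N)) ℂ)
    (hH : H = ∑ l ∈ Finset.range (L + 1), ∑ q ∈ Finset.Icc (-(Q : ℤ)) (Q : ℤ),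
        h l q • (Dzpow (M * N) q * Pzpow (M * N) (l : ℤ))) :
    kron hM (dfnt N) (1 : Matrix (Fin M) (Fin M) ℂ) * H *
        kron hM (dfnt N)ᴴ (1 : Matrix (Fin M) (Fin M) ℂ) =
      ∑ l ∈ Finset.range (L + 1), ∑ q ∈ Finset.Icc (-(Q : ℤ)) (Q : ℤ),
        (alphaCoef N q * h l q) • (Dzpow (M * N) q * Pzpow (M * N) ((l : ℤ) + q * M)) := by
  simp only [hH, Matrix.mul_sum, Matrix.sum_mul, Matrix.mul_smul, Matrix.smul_mul,
    kron_dfnt_one_conj_Dzpow_mul_Pzpow, smul_smul, mul_comm (h _ _)]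
end

section
/- (Proposition 2) Let K = MN and for e ∈ ℂ^K let C(e) be the K×(L+1)(2Q+1) matrix whose column indexed by (l,q), 0 ≤ l ≤ L, −Q ≤ q ≤ Q, equals α_q D_K^q Π_K^{l+qM} e. Then min over all nonzero e ∈ ℂ^K of rank(C(e)) is at most |𝕆(L,Q,M,N)|. In particular, for e₁ = (ε, 0, …, 0)^T with ε ≠ 0, rank(C(e₁)) ≤ |𝕆(L,Q,M,N)|. -/
open Matrix Complex

/-- The `K × (L+1)(2Q+1)` matrix `C(e)` whose column indexed by `(l, q)` (with `0 ≤ l ≤ L` and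
`q = j₂ − Q ∈ {−Q,…,Q}`) is `c_{l,q} = α_q D_K^q Π_K^{l+qM} e`, where `K = MN`. -/
noncomputable def Cmat (M N L Q : ℕ) (e : Fin (M * N) → ℂ) :
    Matrix (Fin (M * N)) (Fin (L + 1) × Fin (2 * Q + 1)) ℂ :=
  Matrix.of fun k j =>
    (alphaCoef N (((j.2 : ℕ) : ℤ) - (Q : ℤ)) •
      ((Dzpow (M * N) (((j.2 : ℕ) : ℤ) - (Q : ℤ)) *
        Pzpow (M * N) (((j.1 : ℕ) : ℤ) + ((((j.2 : ℕ) : ℤ) - (Q : ℤ)) * (M : ℤ)))) *ᵥ e)) k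

/-- The set `𝕆(L,Q,M,N) = { (l + qM) mod (MN) : 0 ≤ l ≤ L, −Q ≤ q ≤ Q } ⊆ {0,…,MN−1}`,
where the mod operation takes values in `{0,…,MN−1}` (integer `emod`). -/
noncomputable def OSet (L Q M N : ℕ) : Finset ℤ :=
  Finset.image (fun p : ℕ × ℤ => ((p.1 : ℤ) + p.2 * (M : ℤ)) % ((M : ℤ) * (N : ℤ)))
    (Finset.range (L + 1) ×ˢ Finset.Icc (-(Q : ℤ)) (Q : ℤ))

/-- The impulse vector `e₁ = (ε, 0, …, 0)^T ∈ ℂ^K`. -/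
def impulseVec (K : ℕ) (ε : ℂ) : Fin K → ℂ := fun k => if (k : ℕ) = 0 then ε else 0

/-!
Multiplication by `α_q D_K^q` does not enlarge the support of a vector, and `Π_K^s` translates it
cyclically by `s`. Hence every nonzero row of `C(e)` has its index in the sumset `supp e + 𝕆` modulo
`K`, so `rank C(e) ≤ |supp e| · |𝕆|`. The impulse vector has a one-point support.
-/

theorem fin_sub_emod_injective (K : ℕ) (a : ℤ) :
    Function.Injective fun k : Fin K => ((k : ℕ) - a : ℤ) % K := by
  intro k k' h
  have hmod : ((k : ℕ) : ℤ) % K = ((k' : ℕ) : ℤ) % K := (Int.emod_sub_cancel_right a).mp h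
  rw [Int.emod_eq_of_lt (by positivity) (by exact_mod_cast k.isLt),
    Int.emod_eq_of_lt (by positivity) (by exact_mod_cast k'.isLt)] at hmod
  exact Fin.ext (by exact_mod_cast hmod)

theorem card_filter_fin_sub_emod_mem_le (K : ℕ) (a : ℤ) (t : Finset ℤ) :
    (Finset.univ.filter fun k : Fin K => ((k : ℕ) - a : ℤ) % K ∈ t).card ≤ t.card :=
  Finset.card_le_card_of_injOn _ (fun _ hk => (Finset.mem_filter.mp hk).2)
    (fin_sub_emod_injective K a).injOn

theorem exists_sub_emod_eq_of_Pzpow_mulVec_ne_zero {K : ℕ} {s : ℤ} {e : Fin K → ℂ} {k : Fin K}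
    (h : (Pzpow K s *ᵥ e) k ≠ 0) :
    ∃ n, e n ≠ 0 ∧ (((k : ℕ) : ℤ) - (n : ℕ)) % K = s % K := by
  rw [mulVec, dotProduct] at h
  obtain ⟨n, -, hn⟩ := Finset.exists_ne_zero_of_sum_ne_zero h
  have hshift : (((k : ℕ) : ℤ) - (n : ℕ) - s) % K = 0 :=
    (ite_ne_right_iff.mp (left_ne_zero_of_mul hn)).1
  exact ⟨n, right_ne_zero_of_mul hn, Int.emod_eq_emod_iff_emod_sub_eq_zero.mpr hshift⟩

theorem add_mul_emod_mem_OSet {L Q l : ℕ} {q : ℤ} (M N : ℕ) (hl : l ≤ L) (hq : |q| ≤ Q) :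
    (l + q * M) % (M * N : ℕ) ∈ OSet L Q M N := by
  rw [Nat.cast_mul]
  exact Finset.mem_image.mpr ⟨(l, q), Finset.mem_product.mpr
    ⟨Finset.mem_range_succ_iff.mpr hl, Finset.mem_Icc.mpr (abs_le.mp hq)⟩, rfl⟩

section Cmat

variable {M N L Q : ℕ} {e : Fin (M * N) → ℂ}

theorem exists_sub_emod_mem_OSet_of_Cmat_ne_zero {k : Fin (M * N)}
    {j : Fin (L + 1) × Fin (2 * Q + 1)} (h : Cmat M N L Q e k j ≠ 0) :
    ∃ n, e n ≠ 0 ∧ (((k : ℕ) : ℤ) - (n : ℕ)) % (M * N : ℕ) ∈ OSet L Q M N := by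
  simp only [Cmat, Dzpow, of_apply, Pi.smul_apply, smul_eq_mul, ← mulVec_mulVec,
    mulVec_diagonal] at h
  obtain ⟨n, hn, hshift⟩ := exists_sub_emod_eq_of_Pzpow_mulVec_ne_zero
    (right_ne_zero_of_mul (right_ne_zero_of_mul h))
  have hq : |((j.2 : ℕ) : ℤ) - Q| ≤ Q := abs_le.mpr (by omega)
  exact ⟨n, hn, hshift ▸ add_mul_emod_mem_OSet M N (Fin.is_le j.1) hq⟩

theorem rank_Cmat_le_card_mul_card_OSet_of_support_subset {s : Finset (Fin (M * N))}
    (hs : Function.support e ⊆ s) :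
    (Cmat M N L Q e).rank ≤ s.card * (OSet L Q M N).card := by
  let translate (n : Fin (M * N)) : Finset (Fin (M * N)) :=
    Finset.univ.filter fun k => (((k : ℕ) : ℤ) - (n : ℕ)) % (M * N : ℕ) ∈ OSet L Q M N
  have hrows : Function.support (Cmat M N L Q e).row ⊆ s.biUnion translate := by
    intro k hk
    obtain ⟨j, hj⟩ := Function.ne_iff.mp hk
    obtain ⟨n, hn, hmem⟩ := exists_sub_emod_mem_OSet_of_Cmat_ne_zero hj
    exact Finset.mem_biUnion.mpr ⟨n, hs hn, Finset.mem_filter.mpr ⟨Finset.mem_univ k, hmem⟩⟩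
  calc (Cmat M N L Q e).rank
      ≤ (s.biUnion translate).card := rank_le_card_of_support_subset _ _ hrows
    _ ≤ s.card * (OSet L Q M N).card :=
        Finset.card_biUnion_le_card_mul _ _ _ fun n _ => card_filter_fin_sub_emod_mem_le _ _ _

end Cmat

theorem impulseVec_eq_single (K : ℕ) [NeZero K] (ε : ℂ) : impulseVec K ε = Pi.single 0 ε := by
  ext k
  simp only [impulseVec, Pi.single_apply, Fin.val_eq_zero_iff]

/-- (Proposition 2) The minimum over all nonzero `e ∈ ℂ^K` of `rank(C(e))` is at most
`|𝕆(L,Q,M,N)|`; in particular, for `e₁ = (ε, 0, …, 0)^T` with `ε ≠ 0`,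
`rank(C(e₁)) ≤ |𝕆(L,Q,M,N)|`. -/
theorem rank_Cmat_min_le_card_OSet (M N L Q : ℕ) (hM : 0 < M) (hN : 0 < N)
    (ε : ℂ) (hε : ε ≠ 0) :
    sInf {r : ℕ | ∃ e : Fin (M * N) → ℂ, e ≠ 0 ∧ r = (Cmat M N L Q e).rank} ≤
        (OSet L Q M N).card ∧
    (Cmat M N L Q (impulseVec (M * N) ε)).rank ≤ (OSet L Q M N).card := by
  have : NeZero (M * N) := ⟨(Nat.mul_pos hM hN).ne'⟩
  have hne : impulseVec (M * N) ε ≠ 0 := by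
    rwa [impulseVec_eq_single, Pi.single_ne_zero_iff]
  have hsupp : Function.support (impulseVec (M * N) ε) ⊆ ({0} : Finset (Fin (M * N))) := by
    rw [impulseVec_eq_single, Finset.coe_singleton]
    exact Pi.support_single_subset
  have hrank : (Cmat M N L Q (impulseVec (M * N) ε)).rank ≤ (OSet L Q M N).card := by
    simpa only [Finset.card_singleton, one_mul] using
      rank_Cmat_le_card_mul_card_OSet_of_support_subset hsupp
  exact ⟨le_trans (Nat.sInf_le ⟨_, hne, rfl⟩) hrank, hrank⟩
end

section
/- (OTFS overall PAPR) Let F_N be the N×N unitary DFT matrix with entries [F_N]_{m,n} = (1/√N)·e^{−2πi mn/N}, let 𝕊 ⊂ ℂ be a finite constellation, and let a = max_{s∈𝕊} |s|². Suppose some b ∈ 𝕊 satisfies |b|² = a. Then max over s̄ ∈ 𝕊^N of ‖F_N^H s̄‖_∞² = aN; the maximum is achieved by s̄ = b·1_N, for which ‖F_N^H (b·1_N)‖_∞² = aN, and for every s̄ ∈ 𝕊^N one has ‖F_N^H s̄‖_∞² ≤ aN. -/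
open Matrix Complex

/-- The `N × N` unitary DFT matrix `F_N`, with entries `[F_N]_{m,n} = (1/√N)·e^{−2πi mn/N}`. -/
noncomputable def dftMat (N : ℕ) : Matrix (Fin N) (Fin N) ℂ :=
  Matrix.of fun m n : Fin N =>
    (1 / (Real.sqrt N : ℂ)) *
      Complex.exp (-(2 * (Real.pi : ℂ) * Complex.I * ((m : ℕ) : ℂ) * ((n : ℕ) : ℂ)) / (N : ℂ))

theorem norm_mulVec_apply_le {m n R : Type*} [Fintype n] [NonUnitalSeminormedRing R]
    {A : Matrix m n R} {v : n → R} {i : m} {c r : ℝ}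
    (hA : ∀ j, ‖A i j‖ ≤ c) (hv : ∀ j, ‖v j‖ ≤ r) :
    ‖(A *ᵥ v) i‖ ≤ Fintype.card n * (c * r) := by
  have norm_term_le (j : n) : ‖A i j * v j‖ ≤ c * r :=
    norm_mul_le_of_le (hA j) (hv j)
  calc ‖(A *ᵥ v) i‖ = ‖∑ j, A i j * v j‖ := rfl
    _ ≤ ∑ _j : n, c * r := norm_sum_le_of_le _ fun j _ => norm_term_le j
    _ = Fintype.card n * (c * r) := by
      rw [Finset.sum_const, nsmul_eq_mul, Finset.card_univ]

theorem norm_dftMat_apply (N : ℕ) (m n : Fin N) : ‖dftMat N m n‖ = 1 / √N := by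
  have exponent_eq : -(2 * (Real.pi : ℂ) * I * ((m : ℕ) : ℂ) * ((n : ℕ) : ℂ)) / (N : ℂ) =
      ((-(2 * Real.pi * (m : ℕ) * (n : ℕ)) / N : ℝ) : ℂ) * I := by
    push_cast
    ring
  rw [dftMat, of_apply, exponent_eq, norm_mul, norm_exp_ofReal_mul_I, mul_one, norm_div, norm_one,
    norm_real, Real.norm_of_nonneg (Real.sqrt_nonneg _)]

theorem dftMat_apply_zero (N : ℕ) [NeZero N] (m : Fin N) : dftMat N m 0 = 1 / (√N : ℂ) := by
  simp [dftMat]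

theorem norm_conjTranspose_dftMat_mulVec_apply_le {N : ℕ} {s : Fin N → ℂ} {r : ℝ}
    (hs : ∀ n, ‖s n‖ ≤ r) (m : Fin N) : ‖((dftMat N)ᴴ *ᵥ s) m‖ ≤ √N * r := by
  have norm_entry_le (n : Fin N) : ‖(dftMat N)ᴴ m n‖ ≤ 1 / √N := by
    rw [conjTranspose_apply, norm_star, norm_dftMat_apply]
  calc ‖((dftMat N)ᴴ *ᵥ s) m‖ ≤ Fintype.card (Fin N) * (1 / √N * r) :=
        norm_mulVec_apply_le norm_entry_le hs
    _ = N / √N * r := by rw [Fintype.card_fin]; ring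
    _ = √N * r := by rw [Real.div_sqrt]

theorem conjTranspose_dftMat_mulVec_const_apply_zero (N : ℕ) [NeZero N] (b : ℂ) :
    ((dftMat N)ᴴ *ᵥ fun _ => b) 0 = √N * b := by
  have entry_eq (n : Fin N) : (dftMat N)ᴴ 0 n = ((1 / √N : ℝ) : ℂ) := by
    rw [conjTranspose_apply, dftMat_apply_zero, ← ofReal_one, ← ofReal_div]
    exact conj_ofReal _
  calc ((dftMat N)ᴴ *ᵥ fun _ => b) 0 = ∑ n, (dftMat N)ᴴ 0 n * b := rfl
    _ = ((N / √N : ℝ) : ℂ) * b := by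
      simp only [entry_eq, Finset.sum_const, Finset.card_univ, Fintype.card_fin, nsmul_eq_mul]
      push_cast
      ring
    _ = √N * b := by rw [Real.div_sqrt]

theorem otfs_overall_papr_general (N : ℕ) (hN : 0 < N) (S : Set ℂ) (b : ℂ)
    (hS : ∀ x ∈ S, ‖x‖ ≤ ‖b‖) :
    (∀ s : Fin N → ℂ, (∀ n, s n ∈ S) →
        ∀ m, ‖((dftMat N)ᴴ *ᵥ s) m‖ ^ 2 ≤ ‖b‖ ^ 2 * N) ∧
    (∃ m : Fin N, ‖((dftMat N)ᴴ *ᵥ fun _ => b) m‖ ^ 2 = ‖b‖ ^ 2 * N) := by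
  have : NeZero N := ⟨hN.ne'⟩
  have peak_sq : (√N * ‖b‖) ^ 2 = ‖b‖ ^ 2 * N := by
    rw [mul_pow, Real.sq_sqrt N.cast_nonneg, mul_comm]
  refine ⟨fun s hs m => ?_, 0, ?_⟩
  · rw [← peak_sq]
    gcongr
    exact norm_conjTranspose_dftMat_mulVec_apply_le (fun n => hS _ (hs n)) m
  · rw [conjTranspose_dftMat_mulVec_const_apply_zero, norm_mul, norm_real,
      Real.norm_of_nonneg (Real.sqrt_nonneg _), peak_sq]

/-- (OTFS overall PAPR) Let `𝕊 ⊂ ℂ` be a finite constellation, `a = max_{s∈𝕊} |s|²`, and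
`b ∈ 𝕊` with `|b|² = a`. Then `max_{s̄ ∈ 𝕊^N} ‖F_N^H s̄‖_∞² = aN`: for every `s̄ ∈ 𝕊^N` one has
`‖F_N^H s̄‖_∞² ≤ aN` (entrywise), and the maximum is achieved by `s̄ = b·1_N`, for which some
entry of `F_N^H (b·1_N)` has squared modulus exactly `aN`. -/
theorem otfs_overall_papr (N : ℕ) (hN : 0 < N) (S : Finset ℂ) (a : ℝ) (b : ℂ)
    (hb : b ∈ S) (ha : ∀ x ∈ S, ‖x‖ ^ 2 ≤ a) (hba : ‖b‖ ^ 2 = a) :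
    (∀ s : Fin N → ℂ, (∀ n, s n ∈ S) →
        ∀ m, ‖((dftMat N)ᴴ *ᵥ s) m‖ ^ 2 ≤ a * N) ∧
    (∃ m : Fin N, ‖((dftMat N)ᴴ *ᵥ fun _ => b) m‖ ^ 2 = a * N) := by
  subst hba
  exact otfs_overall_papr_general N hN S b fun x hx =>
    (sq_le_sq₀ (norm_nonneg x) (norm_nonneg b)).mp (ha x hx)
end
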